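/- The determinant of the DMV updated covariance satisfies the upper bound det P⁺(ω) ≤ (det P / ωⁿ) / ( 1 + ((1-ω)/ω) · trace( S(ω)⁻¹ H_i P H_iᵀ ) ). -/

import Mathlib

open Matrix

/-!
For `A` positive definite and `G = Kᴴ K` positive semidefinite, the matrix determinant lemma gives
`det (A + G) = det A * det (1 + K A⁻¹ Kᴴ)`, while a positive semidefinite `B` with eigenvalues `λᵢ`
satisfies `det (1 + B) = ∏ (1 + λᵢ) ≥ 1 + ∑ λᵢ = 1 + trace B`. Take `A = ω P⁻¹` and
`G = (1 - ω) Hᵢᵀ S⁻¹ Hᵢ`, and invert.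
-/

section

open scoped ComplexOrder MatrixOrder

theorem one_add_sum_le_prod_one_add {ι R : Type*} [CommSemiring R] [PartialOrder R]
    [IsOrderedRing R] {s : Finset ι} {f : ι → R} (hf : ∀ i ∈ s, 0 ≤ f i) :
    1 + ∑ i ∈ s, f i ≤ ∏ i ∈ s, (1 + f i) := by
  classical
  induction s using Finset.induction_on with
  | empty => simp
  | insert a s ha ih =>
    obtain ⟨hfa, hfs⟩ := (Finset.forall_mem_insert _ _ _).mp hf
    rw [Finset.sum_insert ha, Finset.prod_insert ha]
    calc 1 + (f a + ∑ i ∈ s, f i)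
        ≤ 1 + (f a + ∑ i ∈ s, f i) + f a * ∑ i ∈ s, f i :=
          le_add_of_nonneg_right (mul_nonneg hfa (Finset.sum_nonneg hfs))
      _ = (1 + f a) * (1 + ∑ i ∈ s, f i) := by ring
      _ ≤ (1 + f a) * ∏ i ∈ s, (1 + f i) :=
          mul_le_mul_of_nonneg_left (ih hfs) (add_nonneg zero_le_one hfa)

theorem inv_smul_inv_of_isUnit_det {n K : Type*} [Fintype n] [DecidableEq n] [Field K]
    {P : Matrix n n K} {a : K} (hP : IsUnit P.det) (ha : a ≠ 0) : (a • P⁻¹)⁻¹ = a⁻¹ • P :=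
  inv_eq_right_inv <| by
    rw [smul_mul_smul_comm, mul_inv_cancel₀ ha, nonsing_inv_mul _ hP, one_smul]

variable {𝕜 m n : Type*} [RCLike 𝕜] [Fintype n]

theorem posDef_mul_mul_conjTranspose_add_smul [Finite m] {Q : Matrix n n 𝕜} (hQ : Q.PosSemidef)
    (H : Matrix m n 𝕜) {R : Matrix m m 𝕜} (hR : R.PosDef) {c : 𝕜} (hc : 0 < c) :
    (H * Q * Hᴴ + c • R).PosDef :=
  .posSemidef_add (hQ.mul_mul_conjTranspose_same H) (hR.smul hc)

theorem exists_eq_conjTranspose_mul_self_of_posSemidef {A : Matrix n n 𝕜} (hA : A.PosSemidef) :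
    ∃ K : Matrix n n 𝕜, A = Kᴴ * K := by
  classical
  exact CStarAlgebra.nonneg_iff_eq_star_mul_self.mp hA.nonneg

theorem trace_mul_nonneg_of_posSemidef {A B : Matrix n n 𝕜} (hA : A.PosSemidef)
    (hB : B.PosSemidef) : 0 ≤ (A * B).trace := by
  obtain ⟨K, rfl⟩ := exists_eq_conjTranspose_mul_self_of_posSemidef hB
  rw [← mul_assoc, trace_mul_comm, ← mul_assoc]
  exact (hA.mul_mul_conjTranspose_same K).trace_nonneg

variable [DecidableEq n]

theorem det_one_add_eq_prod_one_add_eigenvalues {A : Matrix n n 𝕜} (hA : A.IsHermitian) :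
    (1 + A).det = ∏ i, (1 + (hA.eigenvalues i : 𝕜)) := by
  conv_lhs =>
    rw [hA.spectral_theorem, Unitary.conjStarAlgAut_apply, mul_assoc, det_one_add_mul_comm,
      mul_assoc, Unitary.coe_star_mul_self, mul_one, ← diagonal_one, diagonal_add, det_diagonal]
  rfl

theorem one_add_trace_le_det_one_add {A : Matrix n n 𝕜} (hA : A.PosSemidef) :
    1 + A.trace ≤ (1 + A).det := by
  rw [hA.isHermitian.trace_eq_sum_eigenvalues,
    det_one_add_eq_prod_one_add_eigenvalues hA.isHermitian]
  exact one_add_sum_le_prod_one_add fun i _ ↦ RCLike.ofReal_nonneg.mpr (hA.eigenvalues_nonneg i)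

theorem det_mul_one_add_trace_inv_mul_le_det_add {A G : Matrix n n 𝕜} (hA : A.PosDef)
    (hG : G.PosSemidef) : A.det * (1 + (A⁻¹ * G).trace) ≤ (A + G).det := by
  obtain ⟨K, rfl⟩ := exists_eq_conjTranspose_mul_self_of_posSemidef hG
  rw [det_add_mul _ _ hA.det_pos.ne'.isUnit, ← mul_assoc, trace_mul_comm, ← mul_assoc]
  exact mul_le_mul_of_nonneg_left
    (one_add_trace_le_det_one_add (hA.inv.posSemidef.mul_mul_conjTranspose_same K)) hA.det_pos.le

theorem det_inv_add_le {A G : Matrix n n 𝕜} (hA : A.PosDef) (hG : G.PosSemidef) :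
    (A + G)⁻¹.det ≤ A⁻¹.det / (1 + (A⁻¹ * G).trace) := by
  have htrace : 0 < 1 + (A⁻¹ * G).trace :=
    add_pos_of_pos_of_nonneg one_pos (trace_mul_nonneg_of_posSemidef hA.inv.posSemidef hG)
  calc (A + G)⁻¹.det = (A + G).det⁻¹ := by rw [det_nonsing_inv, Ring.inverse_eq_inv']
    _ ≤ (A.det * (1 + (A⁻¹ * G).trace))⁻¹ :=
        inv_anti₀ (mul_pos hA.det_pos htrace) (det_mul_one_add_trace_inv_mul_le_det_add hA hG)
    _ = A⁻¹.det / (1 + (A⁻¹ * G).trace) := by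
        rw [mul_inv, det_nonsing_inv, Ring.inverse_eq_inv', div_eq_mul_inv]

variable [Fintype m] [DecidableEq m]

theorem dmv_updated_covariance_det_upper_bound_general {a b : 𝕜} (ha : 0 < a) (hb : 0 ≤ b)
    {P : Matrix n n 𝕜} (hP : P.PosDef) {S : Matrix m m 𝕜} (hS : S.PosDef) (H : Matrix m n 𝕜) :
    (a • P⁻¹ + b • (Hᴴ * S⁻¹ * H))⁻¹.det ≤
      (P.det / a ^ Fintype.card n) / (1 + (b / a) * (S⁻¹ * H * P * Hᴴ).trace) := by
  have hinformation : (Hᴴ * S⁻¹ * H).PosSemidef :=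
    hS.inv.posSemidef.conjTranspose_mul_mul_same H
  have htrace : (P * (Hᴴ * S⁻¹ * H)).trace = (S⁻¹ * H * P * Hᴴ).trace := by
    rw [trace_mul_comm, Matrix.mul_assoc, Matrix.mul_assoc, trace_mul_comm,
      ← Matrix.mul_assoc S⁻¹]
  calc (a • P⁻¹ + b • (Hᴴ * S⁻¹ * H))⁻¹.det
      ≤ (a • P⁻¹)⁻¹.det / (1 + ((a • P⁻¹)⁻¹ * (b • (Hᴴ * S⁻¹ * H))).trace) :=
        det_inv_add_le (hP.inv.smul ha) (hinformation.smul hb)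
    _ = (a⁻¹ • P).det / (1 + (b / a) * (P * (Hᴴ * S⁻¹ * H)).trace) := by
        rw [inv_smul_inv_of_isUnit_det hP.det_pos.ne'.isUnit ha.ne', smul_mul_smul_comm,
          trace_smul, smul_eq_mul, inv_mul_eq_div]
    _ = (P.det / a ^ Fintype.card n) / (1 + (b / a) * (S⁻¹ * H * P * Hᴴ).trace) := by
        rw [htrace, det_smul, inv_pow, inv_mul_eq_div]

end

/-- The determinant of the DMV updated covariance satisfies the upper bound
`det P⁺(ω) ≤ (det P / ωⁿ) / (1 + ((1-ω)/ω) · trace(S(ω)⁻¹ H_i P H_iᵀ))`. -/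
theorem dmv_updated_covariance_det_upper_bound
    (n p m : ℕ) (hn : 0 < n) (hp : 0 < p) (hm : 0 < m)
    (ω : ℝ) (hω : ω ∈ Set.Ioo (0 : ℝ) 1)
    (P : Matrix (Fin n) (Fin n) ℝ) (hP : P.PosDef)
    (Pj : Matrix (Fin p) (Fin p) ℝ) (hPj : Pj.PosSemidef)
    (R : Matrix (Fin m) (Fin m) ℝ) (hR : R.PosDef)
    (Hi : Matrix (Fin m) (Fin n) ℝ) (Hj : Matrix (Fin m) (Fin p) ℝ)
    (S : Matrix (Fin m) (Fin m) ℝ) (hS : S = Hj * Pj * Hjᵀ + (1 - ω) • R)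
    (Pplus : Matrix (Fin n) (Fin n) ℝ)
    (hPplus : Pplus = (ω • P⁻¹ + (1 - ω) • (Hiᵀ * S⁻¹ * Hi))⁻¹) :
    Pplus.det ≤
      (P.det / ω ^ n) / (1 + ((1 - ω) / ω) * (S⁻¹ * Hi * P * Hiᵀ).trace) := by
  have hSpos : S.PosDef :=
    hS ▸ posDef_mul_mul_conjTranspose_add_smul hPj Hj hR (sub_pos.mpr hω.2)
  simpa [hPplus] using
    dmv_updated_covariance_det_upper_bound_general hω.1 (sub_nonneg.mpr hω.2.le) hP hSpos Hi
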